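/- arXiv:2107.01060 — 5 statements merged into one kernel-verified Lean document; each statement's English description precedes it below -/
import Mathlib

section
/- Let k ≥ 1 and d = 2^k. For s ∈ {x,y,z} let |0,s⟩, |1,s⟩ be the orthonormal eigenbasis of the Pauli matrix σ_s in ℂ², and for b ∈ {x,y,z}^k, p ∈ {0,1}^k set P^b_p = ⊗_{i=1}^k |p_i,b_i⟩⟨p_i,b_i| ∈ M(ℂ^d). For any real vector f = (f^{ab}_{qp}) indexed by a,b ∈ {x,y,z}^k and p,q ∈ {0,1}^k, the matrix Φ̂ = (1/(3^{2k} d)) ∑_{a,b,p,q} f^{ab}_{qp} (⊗_{i=1}^k (3|p_i,b_i⟩⟨p_i,b_i| − 𝟙₂)) ⊗ (⊗_{j=1}^k (3|q_j,a_j⟩⟨q_j,a_j| − 𝟙₂)) is the unique minimizer over all complex matrices τ ∈ M(ℂ^{d²}) of the least-squares functional τ ↦ ∑_{a,b,p,q} | d·Tr(τ (P^b_p ⊗ P^a_q)) − f^{ab}_{qp} |². -/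
noncomputable section
open Matrix Kronecker BigOperators
open scoped ComplexOrder

/-- The Frobenius (Hilbert–Schmidt) norm `‖A‖₂ = √Tr(AᴴA)` of a complex matrix. -/
def frobNorm {n : Type*} [Fintype n] (A : Matrix n n ℂ) : ℝ :=
  Real.sqrt (Matrix.trace (Aᴴ * A)).re

/-- The operator norm `‖A‖_∞` (largest singular value) of a complex matrix. -/
def opNorm {n : Type*} [Fintype n] [DecidableEq n] (A : Matrix n n ℂ) : ℝ :=
  ‖Matrix.toEuclideanCLM (𝕜 := ℂ) A‖

open scoped MatrixOrder in
/-- The trace norm `‖A‖₁ = Tr √(AᴴA)` of a complex matrix. -/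
def traceNorm {n : Type*} [Fintype n] [DecidableEq n] (A : Matrix n n ℂ) : ℝ :=
  (CFC.sqrt (Aᴴ * A)).trace.re

/-- A density matrix: positive semidefinite with trace one. -/
def IsDensity {n : Type*} [Fintype n] (ρ : Matrix n n ℂ) : Prop :=
  ρ.PosSemidef ∧ ρ.trace = 1

/-- A density matrix `ρ` is `δ`-almost rank `r` if there is a density matrix of rank at most `r`
within operator-norm distance `δ` of it. -/
def AlmostRank {n : Type*} [Fintype n] [DecidableEq n] (r : ℕ) (δ : ℝ) (ρ : Matrix n n ℂ) : Prop :=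
  ∃ σ : Matrix n n ℂ, IsDensity σ ∧ σ.rank ≤ r ∧ opNorm (ρ - σ) ≤ δ

/-- The rank-one (outer-product) matrix `|v⟩⟨v|`. -/
def outer {n : Type*} (v : EuclideanSpace ℂ n) : Matrix n n ℂ :=
  Matrix.of fun i j => v i * (starRingEnd ℂ) (v j)

/-- Partial trace over the first tensor factor. -/
def ptrace1 {d : ℕ} (X : Matrix (Fin d × Fin d) (Fin d × Fin d) ℂ) : Matrix (Fin d) (Fin d) ℂ :=
  Matrix.of fun j j' => ∑ i, X (i, j) (i, j')

/-- Partial trace over the second tensor factor. -/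
def ptrace2 {d : ℕ} (X : Matrix (Fin d × Fin d) (Fin d × Fin d) ℂ) : Matrix (Fin d) (Fin d) ℂ :=
  Matrix.of fun i i' => ∑ j, X (i, j) (i', j)

/-- A family of `m` rank-one projectors, each given by a unit vector. -/
def IsRankOneProjFamily {d m : ℕ} (P : Fin m → Matrix (Fin d) (Fin d) ℂ) : Prop :=
  ∀ l, ∃ v : EuclideanSpace ℂ (Fin d), ‖v‖ = 1 ∧ P l = outer v

/-- Near-isotropy: `∑ l, Tr(P l · A) • P l = A + Tr(A) • 𝟙` for every `A`. -/
def NearIsotropic {d m : ℕ} (P : Fin m → Matrix (Fin d) (Fin d) ℂ) : Prop :=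
  ∀ A : Matrix (Fin d) (Fin d) ℂ,
    ∑ l, Matrix.trace (P l * A) • P l = A + Matrix.trace A • (1 : Matrix (Fin d) (Fin d) ℂ)

/-- `ket s o` is the eigenvector `|o, s⟩` of the Pauli matrix `σ_s`, where
`s = 0, 1, 2` encodes `x, y, z`. -/
def ket : Fin 3 → Fin 2 → Fin 2 → ℂ
  | 0, 0 => ![(Real.sqrt 2 : ℂ)⁻¹, (Real.sqrt 2 : ℂ)⁻¹]
  | 0, 1 => ![(Real.sqrt 2 : ℂ)⁻¹, -(Real.sqrt 2 : ℂ)⁻¹]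
  | 1, 0 => ![(Real.sqrt 2 : ℂ)⁻¹, Complex.I * (Real.sqrt 2 : ℂ)⁻¹]
  | 1, 1 => ![(Real.sqrt 2 : ℂ)⁻¹, -(Complex.I * (Real.sqrt 2 : ℂ)⁻¹)]
  | 2, 0 => ![1, 0]
  | 2, 1 => ![0, 1]

/-- The rank-one projector `|o, s⟩⟨o, s|` onto a Pauli eigenvector. -/
def pauliProj (s : Fin 3) (o : Fin 2) : Matrix (Fin 2) (Fin 2) ℂ :=
  Matrix.of fun a b => ket s o a * (starRingEnd ℂ) (ket s o b)

/-- The single-qubit least-squares building block `3|o, s⟩⟨o, s| − 𝟙₂`. -/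
def pauliM (s : Fin 3) (o : Fin 2) : Matrix (Fin 2) (Fin 2) ℂ :=
  (3 : ℂ) • pauliProj s o - 1

/-- `k`-fold tensor product `⊗_{i=1}^k A i` of 2×2 matrices, realized as a matrix indexed by
`Fin k → Fin 2`. -/
def tensPow {k : ℕ} (A : Fin k → Matrix (Fin 2) (Fin 2) ℂ) :
    Matrix (Fin k → Fin 2) (Fin k → Fin 2) ℂ :=
  Matrix.of fun x y => ∏ i, A i (x i) (y i)

/-- The least-squares estimator
`Φ̂ = (1/(3^{2k} d)) ∑_{a,b,p,q} f^{ab}_{qp} (⊗_i (3|p_i,b_i⟩⟨p_i,b_i| − 𝟙₂)) ⊗ (⊗_j (3|q_j,a_j⟩⟨q_j,a_j| − 𝟙₂))`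
for direct QPT with single-qubit Pauli inputs and Pauli measurements. -/
def pauliLSEstimator (k : ℕ)
    (f : (Fin k → Fin 3) → (Fin k → Fin 3) → (Fin k → Fin 2) → (Fin k → Fin 2) → ℝ) :
    Matrix ((Fin k → Fin 2) × (Fin k → Fin 2)) ((Fin k → Fin 2) × (Fin k → Fin 2)) ℂ :=
  (1 / ((3 : ℂ) ^ (2 * k) * (2 : ℂ) ^ k)) •
    ∑ a : Fin k → Fin 3, ∑ b : Fin k → Fin 3, ∑ p : Fin k → Fin 2, ∑ q : Fin k → Fin 2,
      (f a b q p : ℂ) •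
        (tensPow (fun i => pauliM (b i) (p i)) ⊗ₖ tensPow (fun j => pauliM (a j) (q j)))

/-- The least-squares functional `τ ↦ ∑_{a,b,p,q} | d·Tr(τ (P^b_p ⊗ P^a_q)) − f^{ab}_{qp} |²`,
with `d = 2^k`. -/
def pauliLSFunctional (k : ℕ)
    (f : (Fin k → Fin 3) → (Fin k → Fin 3) → (Fin k → Fin 2) → (Fin k → Fin 2) → ℝ)
    (τ : Matrix ((Fin k → Fin 2) × (Fin k → Fin 2)) ((Fin k → Fin 2) × (Fin k → Fin 2)) ℂ) : ℝ :=
  ∑ a : Fin k → Fin 3, ∑ b : Fin k → Fin 3, ∑ p : Fin k → Fin 2, ∑ q : Fin k → Fin 2,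
    ‖(2 : ℂ) ^ k *
        Matrix.trace (τ *
          (tensPow (fun i => pauliProj (b i) (p i)) ⊗ₖ tensPow (fun j => pauliProj (a j) (q j))))
      - (f a b q p : ℂ)‖ ^ 2

/-!
The analysis map `T τ = (d Tr(τ (P^b_p ⊗ P^a_q)))` has a left inverse `R`, built from the dual
frame `(3P - 1) ⊗ ⋯ ⊗ (3P - 1)`, and `T R` is self-adjoint. Hence `T R` is the orthogonal
projection onto the range of `T`, so that `R f` is the unique least-squares solution. Both
properties of `R` are multiplicative under tensor products, which leaves a single qubit: there the
six Pauli projectors form a complex projective 2-design, `∑ Tr(A P) P = A + Tr(A) 𝟙`, and this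
determines the dual frame.
-/

section SymmetricLeftInverse

variable {𝕜 E F : Type*} [RCLike 𝕜] [AddCommGroup E] [Module 𝕜 E] [NormedAddCommGroup F]
  [InnerProductSpace 𝕜 F] {T : E →ₗ[𝕜] F} {R : F →ₗ[𝕜] E}

theorem inner_residual_apply_eq_zero (hRT : Function.LeftInverse R T)
    (hTR : (T ∘ₗ R).IsSymmetric) (x : E) (y : F) : inner 𝕜 (T (R y) - y) (T x) = 0 := by
  calc inner 𝕜 (T (R y) - y) (T x)
      = inner 𝕜 (T (R y) - y) ((T ∘ₗ R) (T x)) := by rw [LinearMap.comp_apply, hRT]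
    _ = inner 𝕜 ((T ∘ₗ R) (T (R y) - y)) (T x) := (hTR _ _).symm
    _ = 0 := by rw [LinearMap.comp_apply, map_sub, hRT, sub_self, map_zero, inner_zero_left]

theorem norm_apply_sub_sq_eq_add (hRT : Function.LeftInverse R T)
    (hTR : (T ∘ₗ R).IsSymmetric) (x : E) (y : F) :
    ‖T x - y‖ ^ 2 = ‖T (R y) - y‖ ^ 2 + ‖T (x - R y)‖ ^ 2 := by
  have hsplit : T x - y = (T (R y) - y) + T (x - R y) := by rw [map_sub]; abel
  rw [hsplit, norm_add_pow_two (𝕜 := 𝕜), inner_residual_apply_eq_zero hRT hTR]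
  simp

theorem norm_apply_leftInverse_sub_sq_le (hRT : Function.LeftInverse R T)
    (hTR : (T ∘ₗ R).IsSymmetric) (x : E) (y : F) : ‖T (R y) - y‖ ^ 2 ≤ ‖T x - y‖ ^ 2 := by
  rw [norm_apply_sub_sq_eq_add hRT hTR x y]
  exact le_add_of_nonneg_right (sq_nonneg _)

theorem eq_leftInverse_apply_of_norm_sub_sq_eq (hRT : Function.LeftInverse R T)
    (hTR : (T ∘ₗ R).IsSymmetric) {x : E} {y : F} (h : ‖T x - y‖ ^ 2 = ‖T (R y) - y‖ ^ 2) :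
    x = R y := by
  rw [norm_apply_sub_sq_eq_add hRT hTR x y, add_eq_left, sq_eq_zero_iff, norm_eq_zero] at h
  exact sub_eq_zero.mp (hRT.injective (h.trans (map_zero T).symm))

end SymmetricLeftInverse

/-- The family `M` is the canonical dual of the frame `P`, for the trace pairing: analyzing with
`P` and then synthesizing with `M` is the identity, and the opposite composition, whose matrix is
the cross-Gram matrix `Tr(P i * M j)`, is self-adjoint. -/
structure IsCanonicalDual {ι n R : Type*} [Fintype ι] [Fintype n] [CommSemiring R] [StarRing R]
    (P M : ι → Matrix n n R) : Prop where
  sum_trace_smul : ∀ A, ∑ j, trace (A * P j) • M j = A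
  star_trace : ∀ i j, star (trace (P i * M j)) = trace (P j * M i)

theorem sum_trace_smul_eq_self_iff {ι n R : Type*} [Fintype ι] [Fintype n] [DecidableEq n]
    [CommSemiring R] {P M : ι → Matrix n n R} :
    (∀ A, ∑ j, trace (A * P j) • M j = A) ↔
      ∀ x y u v, ∑ j, P j y x * M j u v = if x = u ∧ y = v then 1 else 0 := by
  refine ⟨fun h x y u v => ?_, fun h A => ?_⟩
  · simpa [Matrix.sum_apply, trace_single_mul, single_apply]
      using congr_fun₂ (h (single x y 1)) u v
  · ext u v
    calc (∑ j, trace (A * P j) • M j) u v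
        = ∑ j, ∑ x, ∑ y, A x y * (P j y x * M j u v) := by
          simp [Matrix.sum_apply, trace, Matrix.mul_apply, Finset.sum_mul, mul_assoc]
      _ = ∑ x, ∑ y, A x y * ∑ j, P j y x * M j u v := by
          rw [Finset.sum_comm]
          simp_rw [Finset.sum_comm (s := (Finset.univ : Finset ι)), Finset.mul_sum]
      _ = A u v := by simp [h, ite_and]

section Analysis

variable {ι n 𝕜 : Type*} [Fintype ι] [Fintype n] [RCLike 𝕜]

/-- The analysis operator `A ↦ (Tr(A P j))_j` of a family of matrices. -/
def frameAnalysis (P : ι → Matrix n n 𝕜) : Matrix n n 𝕜 →ₗ[𝕜] EuclideanSpace 𝕜 ι where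
  toFun A := WithLp.toLp 2 fun j => trace (A * P j)
  map_add' A B := by ext; simp [Matrix.add_mul]
  map_smul' c A := by ext; simp

/-- The synthesis operator `y ↦ ∑ j, y j • M j` of a family of matrices. -/
def frameSynthesis (M : ι → Matrix n n 𝕜) : EuclideanSpace 𝕜 ι →ₗ[𝕜] Matrix n n 𝕜 :=
  Fintype.linearCombination 𝕜 M ∘ₗ (WithLp.linearEquiv 2 𝕜 (ι → 𝕜)).toLinearMap

variable {P M : ι → Matrix n n 𝕜}

theorem IsCanonicalDual.leftInverse_frameSynthesis_frameAnalysis (h : IsCanonicalDual P M) :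
    Function.LeftInverse (frameSynthesis M) (frameAnalysis P) := fun A => by
  simpa [frameSynthesis, frameAnalysis, Fintype.linearCombination_apply] using h.sum_trace_smul A

theorem IsCanonicalDual.isSymmetric_frameAnalysis_comp_frameSynthesis (h : IsCanonicalDual P M) :
    (frameAnalysis P ∘ₗ frameSynthesis M).IsSymmetric := fun y z => by
  have hgram (y : EuclideanSpace 𝕜 ι) (i : ι) :
      (frameAnalysis P ∘ₗ frameSynthesis M) y i = ∑ j, y j * trace (P i * M j) := by
    simp [frameAnalysis, frameSynthesis, Fintype.linearCombination_apply, trace_mul_comm _ (P i),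
      Matrix.mul_sum]
  have hstar (i j : ι) : (starRingEnd 𝕜) (trace (P i * M j)) = trace (P j * M i) := h.star_trace i j
  simp only [PiLp.inner_apply, hgram, RCLike.inner_apply, map_sum, map_mul, hstar, Finset.mul_sum,
    Finset.sum_mul]
  rw [Finset.sum_comm]
  exact Finset.sum_congr rfl fun _ _ => Finset.sum_congr rfl fun _ _ => by ring

end Analysis

namespace IsCanonicalDual

variable {ι κ m n R : Type*} [Fintype ι] [Fintype κ] [Fintype m] [Fintype n]

theorem reindex [CommSemiring R] [StarRing R] {P M : ι → Matrix n n R} (h : IsCanonicalDual P M)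
    (e : κ ≃ ι) : IsCanonicalDual (P ∘ e) (M ∘ e) where
  sum_trace_smul A := (e.sum_comp fun j => trace (A * P j) • M j).trans (h.sum_trace_smul A)
  star_trace i j := h.star_trace (e i) (e j)

theorem smul_inv_smul [Field R] [StarRing R] {P M : ι → Matrix n n R} (h : IsCanonicalDual P M)
    {c : R} (hc : c ≠ 0) : IsCanonicalDual (fun j => c • P j) (fun j => c⁻¹ • M j) where
  sum_trace_smul A := by
    simpa [smul_smul, mul_right_comm, hc] using h.sum_trace_smul A
  star_trace i j := by simpa [smul_smul, hc] using h.star_trace i j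

theorem kronecker [CommSemiring R] [StarRing R] {P M : ι → Matrix m m R}
    {Q N : κ → Matrix n n R} (hP : IsCanonicalDual P M) (hQ : IsCanonicalDual Q N) :
    IsCanonicalDual (fun j : ι × κ => P j.1 ⊗ₖ Q j.2) (fun j => M j.1 ⊗ₖ N j.2) where
  sum_trace_smul := by
    classical
    rw [sum_trace_smul_eq_self_iff]
    rintro ⟨x₁, x₂⟩ ⟨y₁, y₂⟩ ⟨u₁, u₂⟩ ⟨v₁, v₂⟩
    have hM := sum_trace_smul_eq_self_iff.mp hP.sum_trace_smul x₁ y₁ u₁ v₁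
    have hN := sum_trace_smul_eq_self_iff.mp hQ.sum_trace_smul x₂ y₂ u₂ v₂
    calc ∑ j : ι × κ, (P j.1 ⊗ₖ Q j.2) (y₁, y₂) (x₁, x₂) * (M j.1 ⊗ₖ N j.2) (u₁, u₂) (v₁, v₂)
        = (∑ i, P i y₁ x₁ * M i u₁ v₁) * ∑ j, Q j y₂ x₂ * N j u₂ v₂ := by
          simp only [Fintype.sum_mul_sum, Fintype.sum_prod_type, kroneckerMap_apply,
            mul_mul_mul_comm]
      _ = _ := by
          rw [hM, hN, ite_zero_mul_ite_zero, mul_one]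
          simp only [Prod.mk.injEq, and_and_and_comm]
  star_trace i j := by
    simp only [← mul_kronecker_mul, trace_kronecker, star_mul', hP.star_trace, hQ.star_trace]

/-- The dual is the image of `P` under the inverse `A ↦ A - Tr(A) / (dim + 1) 𝟙` of the frame
operator `A ↦ A + Tr(A) 𝟙`. -/
theorem of_sum_trace_smul_eq_add [DecidableEq n] [Field R] [CharZero R] [StarRing R]
    {P : ι → Matrix n n R} (hherm : ∀ j, (P j).IsHermitian) (htrace : ∀ j, trace (P j) = 1)
    (hP : ∀ A, ∑ j, trace (A * P j) • P j = A + trace A • (1 : Matrix n n R)) :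
    IsCanonicalDual P (fun j => P j - (Fintype.card n + 1 : R)⁻¹ • 1) where
  sum_trace_smul A := by
    have hsum : ∑ j, trace (A * P j) = (Fintype.card n + 1) * trace A := by
      have htr := congr_arg trace (hP A)
      simp only [trace_sum, trace_smul, htrace, smul_eq_mul, mul_one, trace_add, trace_one] at htr
      rw [htr]; ring
    have hcard : (Fintype.card n + 1 : R) ≠ 0 := Nat.cast_add_one_ne_zero _
    simp only [smul_sub, Finset.sum_sub_distrib, hP]
    rw [← Finset.sum_smul, hsum, smul_smul, mul_right_comm, mul_inv_cancel₀ hcard, one_mul,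
      add_sub_cancel_right]
  star_trace i j := by
    have hij : star (trace (P i * P j)) = trace (P j * P i) := by
      rw [← trace_conjTranspose, conjTranspose_mul, hherm i, hherm j]
    simp [Matrix.mul_sub, htrace, hij]

end IsCanonicalDual

section TensorPower

variable {k : ℕ}

theorem tensPow_mul (A B : Fin k → Matrix (Fin 2) (Fin 2) ℂ) :
    tensPow A * tensPow B = tensPow fun i => A i * B i := by
  ext x y
  simp only [tensPow, Matrix.mul_apply, of_apply, Fintype.prod_sum, Finset.prod_mul_distrib]

theorem trace_tensPow (A : Fin k → Matrix (Fin 2) (Fin 2) ℂ) :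
    trace (tensPow A) = ∏ i, trace (A i) := by
  simp only [tensPow, trace, diag_apply, of_apply, Fintype.prod_sum]

theorem tensPow_smul (c : ℂ) (A : Fin k → Matrix (Fin 2) (Fin 2) ℂ) :
    (tensPow fun i => c • A i) = c ^ k • tensPow A := by
  ext x y
  simp [tensPow, Finset.prod_mul_distrib]

theorem IsCanonicalDual.tensPow {ι : Fin k → Type*} [∀ i, Fintype (ι i)]
    {P M : ∀ i, ι i → Matrix (Fin 2) (Fin 2) ℂ} (h : ∀ i, IsCanonicalDual (P i) (M i)) :
    IsCanonicalDual (fun j : ∀ i, ι i => tensPow fun i => P i (j i))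
      (fun j => tensPow fun i => M i (j i)) where
  sum_trace_smul := by
    rw [sum_trace_smul_eq_self_iff]
    intro x y u v
    calc ∑ j : ∀ i, ι i, (∏ i, P i (j i) (y i) (x i)) * ∏ i, M i (j i) (u i) (v i)
        = ∏ i, ∑ s, P i s (y i) (x i) * M i s (u i) (v i) := by
          simp only [Fintype.prod_sum, Finset.prod_mul_distrib]
      _ = ∏ i, if x i = u i ∧ y i = v i then 1 else 0 :=
          Finset.prod_congr rfl fun i _ => by
            rw [sum_trace_smul_eq_self_iff.mp (h i).sum_trace_smul]
      _ = if x = u ∧ y = v then 1 else 0 := by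
          simp only [Fintype.prod_ite_zero, Finset.prod_const_one, forall_and, ← funext_iff]
  star_trace j l := by
    simp only [tensPow_mul, trace_tensPow, star_prod, (h _).star_trace]

end TensorPower

section Pauli

/-- The Pauli matrices, with `0, 1, 2` encoding `x, y, z` as in `ket`. -/
def pauliMatrix : Fin 3 → Matrix (Fin 2) (Fin 2) ℂ :=
  ![!![0, 1; 1, 0], !![0, -Complex.I; Complex.I, 0], !![1, 0; 0, -1]]

theorem trace_pauliMatrix (s : Fin 3) : trace (pauliMatrix s) = 0 := by
  fin_cases s <;> simp [pauliMatrix, trace_fin_two]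

theorem trace_smul_one_add_sum_trace_mul_pauliMatrix_smul (A : Matrix (Fin 2) (Fin 2) ℂ) :
    trace A • (1 : Matrix (Fin 2) (Fin 2) ℂ) + ∑ s, trace (A * pauliMatrix s) • pauliMatrix s =
      (2 : ℂ) • A := by
  ext i j
  fin_cases i <;> fin_cases j <;>
    simp [pauliMatrix, Fin.sum_univ_three, trace_fin_two, Matrix.mul_apply] <;>
    grind [Complex.I_mul_I]

theorem pauliProj_eq (s : Fin 3) (o : Fin 2) :
    pauliProj s o = (2⁻¹ : ℂ) • (1 + (-1 : ℂ) ^ (o : ℕ) • pauliMatrix s) := by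
  have hsqrt : ((Real.sqrt 2 : ℂ)⁻¹) * (Real.sqrt 2 : ℂ)⁻¹ = 2⁻¹ := by
    rw [← mul_inv, ← Complex.ofReal_mul, Real.mul_self_sqrt zero_le_two, Complex.ofReal_ofNat]
  ext i j
  fin_cases s <;> fin_cases o <;> fin_cases i <;> fin_cases j <;>
    simp [pauliProj, ket, pauliMatrix, -Complex.ofReal_inv] <;> grind [Complex.I_mul_I]

theorem isHermitian_pauliProj (s : Fin 3) (o : Fin 2) : (pauliProj s o).IsHermitian := by
  ext i j
  simp [pauliProj, mul_comm]

theorem trace_pauliProj (s : Fin 3) (o : Fin 2) : trace (pauliProj s o) = 1 := by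
  simp [pauliProj_eq, trace_pauliMatrix]

theorem sum_trace_mul_pauliProj_smul (A : Matrix (Fin 2) (Fin 2) ℂ) :
    ∑ j : Fin 3 × Fin 2, trace (A * pauliProj j.1 j.2) • pauliProj j.1 j.2 =
      A + trace A • (1 : Matrix (Fin 2) (Fin 2) ℂ) := by
  have hbasis (s : Fin 3) : ∑ o, trace (A * pauliProj s o) • pauliProj s o =
      (2⁻¹ : ℂ) • (trace A • 1 + trace (A * pauliMatrix s) • pauliMatrix s) := by
    simp only [pauliProj_eq, Fin.sum_univ_two, Matrix.mul_smul, Matrix.mul_add, Matrix.mul_one,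
      trace_smul, trace_add, smul_eq_mul, Fin.val_zero, Fin.val_one, pow_zero, pow_one]
    module
  rw [Fintype.sum_prod_type]
  simp only [hbasis, ← Finset.smul_sum, Finset.sum_add_distrib, Finset.sum_const, Finset.card_univ,
    Fintype.card_fin]
  rw [eq_sub_of_add_eq' (trace_smul_one_add_sum_trace_mul_pauliMatrix_smul A)]
  module

theorem isCanonicalDual_pauliProj :
    IsCanonicalDual (fun j : Fin 3 × Fin 2 => pauliProj j.1 j.2)
      (fun j => (3⁻¹ : ℂ) • pauliM j.1 j.2) := by
  have hdual (j : Fin 3 × Fin 2) : (3⁻¹ : ℂ) • pauliM j.1 j.2 =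
      pauliProj j.1 j.2 - (Fintype.card (Fin 2) + 1 : ℂ)⁻¹ • 1 := by
    rw [pauliM, smul_sub, inv_smul_smul₀ three_ne_zero]
    norm_num
  simp only [hdual]
  exact .of_sum_trace_smul_eq_add (fun _ => isHermitian_pauliProj _ _)
    (fun _ => trace_pauliProj _ _) sum_trace_mul_pauliProj_smul

end Pauli

section ProcessTomography

/-- The index set of the data `f^{ab}_{qp}`, as tuples `(a, b, p, q)` in the order of summation of
`pauliLSFunctional`. -/
abbrev QPTIndex (k : ℕ) : Type :=
  (Fin k → Fin 3) × (Fin k → Fin 3) × (Fin k → Fin 2) × (Fin k → Fin 2)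

variable {k : ℕ}

/-- Groups an index `(a, b, p, q)` into the pairs `(b i, p i)` of the first tensor factor and the
pairs `(a i, q i)` of the second. -/
def qptIndexEquiv : QPTIndex k ≃ (Fin k → Fin 3 × Fin 2) × (Fin k → Fin 3 × Fin 2) where
  toFun j := (fun i => (j.2.1 i, j.2.2.1 i), fun i => (j.1 i, j.2.2.2 i))
  invFun j := (fun i => (j.2 i).1, fun i => (j.1 i).1, fun i => (j.1 i).2, fun i => (j.2 i).2)

/-- The measured operators `d (P^b_p ⊗ P^a_q)`. -/
def qptFrame (j : QPTIndex k) :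
    Matrix ((Fin k → Fin 2) × (Fin k → Fin 2)) ((Fin k → Fin 2) × (Fin k → Fin 2)) ℂ :=
  (2 ^ k : ℂ) • (tensPow (fun i => pauliProj (j.2.1 i) (j.2.2.1 i)) ⊗ₖ
    tensPow (fun i => pauliProj (j.1 i) (j.2.2.2 i)))

/-- The canonical dual of `qptFrame`, whose combination with weights `f^{ab}_{qp}` is the
estimator. -/
def qptDualFrame (j : QPTIndex k) :
    Matrix ((Fin k → Fin 2) × (Fin k → Fin 2)) ((Fin k → Fin 2) × (Fin k → Fin 2)) ℂ :=
  (3 ^ (2 * k) * 2 ^ k : ℂ)⁻¹ • (tensPow (fun i => pauliM (j.2.1 i) (j.2.2.1 i)) ⊗ₖ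
    tensPow (fun i => pauliM (j.1 i) (j.2.2.2 i)))

theorem isCanonicalDual_qptFrame : IsCanonicalDual (qptFrame (k := k)) qptDualFrame := by
  have hfactor := IsCanonicalDual.tensPow fun _ : Fin k => isCanonicalDual_pauliProj
  have hdual (j : QPTIndex k) : qptDualFrame j = (2 ^ k : ℂ)⁻¹ •
      (tensPow (fun i => (3⁻¹ : ℂ) • pauliM (j.2.1 i) (j.2.2.1 i)) ⊗ₖ
        tensPow (fun i => (3⁻¹ : ℂ) • pauliM (j.1 i) (j.2.2.2 i))) := by
    simp only [qptDualFrame, tensPow_smul, smul_kronecker, kronecker_smul, smul_smul]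
    congr 1
    rw [mul_inv, two_mul, pow_add, inv_pow]
    ring
  rw [funext hdual]
  exact ((hfactor.kronecker hfactor).reindex qptIndexEquiv).smul_inv_smul
    (pow_ne_zero k two_ne_zero)

/-- The data `f^{ab}_{qp}` as a vector of the Euclidean space in which residuals are measured. -/
def qptData (f : (Fin k → Fin 3) → (Fin k → Fin 3) → (Fin k → Fin 2) → (Fin k → Fin 2) → ℝ) :
    EuclideanSpace ℂ (QPTIndex k) :=
  WithLp.toLp 2 fun j => (f j.1 j.2.1 j.2.2.2 j.2.2.1 : ℂ)

variable (f : (Fin k → Fin 3) → (Fin k → Fin 3) → (Fin k → Fin 2) → (Fin k → Fin 2) → ℝ)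

theorem pauliLSFunctional_eq_norm_sq
    (τ : Matrix ((Fin k → Fin 2) × (Fin k → Fin 2)) ((Fin k → Fin 2) × (Fin k → Fin 2)) ℂ) :
    pauliLSFunctional k f τ = ‖frameAnalysis qptFrame τ - qptData f‖ ^ 2 := by
  simp [pauliLSFunctional, EuclideanSpace.norm_sq_eq, frameAnalysis, qptFrame, qptData,
    Fintype.sum_prod_type]

theorem pauliLSEstimator_eq_frameSynthesis :
    pauliLSEstimator k f = frameSynthesis qptDualFrame (qptData f) := by
  simp only [pauliLSEstimator, frameSynthesis, qptDualFrame, qptData, LinearMap.comp_apply,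
    LinearEquiv.coe_coe, WithLp.linearEquiv_apply, Fintype.linearCombination_apply,
    Fintype.sum_prod_type, Finset.smul_sum, one_div]
  simp_rw [smul_comm (3 ^ (2 * k) * 2 ^ k : ℂ)⁻¹]
  rfl

end ProcessTomography

/-- Proposition 1: the matrix `Φ̂` is the unique minimizer of the least-squares
functional for direct QPT with single-qubit Pauli inputs and Pauli measurements. -/
theorem pauliLSEstimator_unique_minimizer (k : ℕ) (hk : 1 ≤ k)
    (f : (Fin k → Fin 3) → (Fin k → Fin 3) → (Fin k → Fin 2) → (Fin k → Fin 2) → ℝ) :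
    (∀ τ, pauliLSFunctional k f (pauliLSEstimator k f) ≤ pauliLSFunctional k f τ) ∧
    (∀ τ, pauliLSFunctional k f τ = pauliLSFunctional k f (pauliLSEstimator k f) →
      τ = pauliLSEstimator k f) := by
  have hRT := (isCanonicalDual_qptFrame (k := k)).leftInverse_frameSynthesis_frameAnalysis
  have hTR := (isCanonicalDual_qptFrame (k := k)).isSymmetric_frameAnalysis_comp_frameSynthesis
  simp only [pauliLSFunctional_eq_norm_sq, pauliLSEstimator_eq_frameSynthesis]
  exact ⟨fun τ => norm_apply_leftInverse_sub_sq_le hRT hTR τ (qptData f),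
    fun τ hτ => eq_leftInverse_apply_of_norm_sub_sq_eq hRT hTR hτ⟩
end
end

section
/- Let d ≥ 2, m = d(d+1), and let {P_l}_{l=1}^m and {Q_k}_{k=1}^m be near-isotropic families of rank-one projectors in M(ℂ^d). Define the linear map T on M(ℂ^{d²}) by T(Z) = (d⁴/m²) ∑_{l,k} Tr(Z (P_l ⊗ Q_k)) P_l ⊗ Q_k. Then: (i) T(X ⊗ Y) = (d²/(d+1)²) X ⊗ Y whenever Tr(X) = Tr(Y) = 0; (ii) T(X ⊗ 𝟙_d) = (d²/(d+1)) X ⊗ 𝟙_d whenever Tr(X) = 0; (iii) T(𝟙_d ⊗ Y) = (d²/(d+1)) 𝟙_d ⊗ Y whenever Tr(Y) = 0; (iv) T(𝟙_d ⊗ 𝟙_d) = d² 𝟙_d ⊗ 𝟙_d. -/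
noncomputable section
open Matrix Kronecker BigOperators
open scoped ComplexOrder

/-- The map `T = 𝒜†𝒜` of the MUB measurement map:
`T(Z) = (d⁴/m²) ∑_{l,k} Tr(Z (P_l ⊗ Q_k)) P_l ⊗ Q_k`, with `m = d(d+1)`. -/
def mubTmap (d : ℕ) (P Q : Fin (d * (d + 1)) → Matrix (Fin d) (Fin d) ℂ)
    (Z : Matrix (Fin d × Fin d) (Fin d × Fin d) ℂ) :
    Matrix (Fin d × Fin d) (Fin d × Fin d) ℂ :=
  ((d : ℂ) ^ 4 / ((d * (d + 1) : ℕ) : ℂ) ^ 2) •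
    ∑ l, ∑ k, Matrix.trace (Z * (P l ⊗ₖ Q k)) • (P l ⊗ₖ Q k)

/-!
The frame operator of a family of product matrices `P l ⊗ Q k` is the tensor product of the frame
operators of `P` and `Q`. Near-isotropy of `P` says that its frame operator is `A ↦ A + Tr(A) • 𝟙`,
which acts as `1` on traceless matrices and as `d + 1` on multiples of `𝟙`. Each eigenvalue of `T`
is therefore a product of two of these numbers, rescaled by `d⁴/m² = d²/(d+1)²`.
-/

theorem sum_kronecker_sum {R ι κ l m n p : Type*} [NonUnitalNonAssocSemiring R] (s : Finset ι)
    (t : Finset κ) (A : ι → Matrix l m R) (B : κ → Matrix n p R) :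
    (∑ i ∈ s, A i) ⊗ₖ (∑ j ∈ t, B j) = ∑ i ∈ s, ∑ j ∈ t, A i ⊗ₖ B j := by
  ext
  simp only [kroneckerMap_apply, Matrix.sum_apply, Finset.sum_mul_sum]

section FrameOperator

variable {R ι κ m n : Type*} [CommSemiring R] [Fintype ι] [Fintype κ] [Fintype m] [Fintype n]

/-- The frame operator `A ↦ ∑ l, Tr(P l · A) • P l` of a family of square matrices. For Hermitian
complex `P l` it is `𝒜†𝒜`, where `𝒜` is the measurement map `A ↦ (Tr(P l · A))_l`. -/
def frameOperator (P : ι → Matrix n n R) (A : Matrix n n R) : Matrix n n R :=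
  ∑ l, trace (P l * A) • P l

theorem frameOperator_kronecker (P : ι → Matrix m m R) (Q : κ → Matrix n n R)
    (X : Matrix m m R) (Y : Matrix n n R) :
    frameOperator (fun p : ι × κ => P p.1 ⊗ₖ Q p.2) (X ⊗ₖ Y) =
      frameOperator P X ⊗ₖ frameOperator Q Y :=
  calc
    frameOperator (fun p : ι × κ => P p.1 ⊗ₖ Q p.2) (X ⊗ₖ Y)
      = ∑ l, ∑ k, (trace (P l * X) • P l) ⊗ₖ (trace (Q k * Y) • Q k) := by
        simp only [frameOperator, Fintype.sum_prod_type, ← mul_kronecker_mul, trace_kronecker,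
          smul_kronecker, kronecker_smul, smul_smul, mul_comm]
    _ = frameOperator P X ⊗ₖ frameOperator Q Y := by
        simp only [frameOperator, sum_kronecker_sum]

end FrameOperator

namespace NearIsotropic

variable {d m : ℕ} {P : Fin m → Matrix (Fin d) (Fin d) ℂ}

theorem frameOperator_eq_self_of_trace_eq_zero (hP : NearIsotropic P)
    {X : Matrix (Fin d) (Fin d) ℂ} (hX : trace X = 0) : frameOperator P X = X := by
  rw [frameOperator, hP X, hX, zero_smul, add_zero]

theorem frameOperator_one (hP : NearIsotropic P) :
    frameOperator P 1 = ((d : ℂ) + 1) • (1 : Matrix (Fin d) (Fin d) ℂ) := by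
  rw [frameOperator, hP 1, trace_one, Fintype.card_fin, add_smul, one_smul, add_comm]

end NearIsotropic

section MubTmap

variable {d : ℕ}

theorem mubTmap_eq_smul_frameOperator (hd : d ≠ 0)
    (P Q : Fin (d * (d + 1)) → Matrix (Fin d) (Fin d) ℂ)
    (Z : Matrix (Fin d × Fin d) (Fin d × Fin d) ℂ) :
    mubTmap d P Q Z =
      ((d : ℂ) ^ 2 / ((d : ℂ) + 1) ^ 2) •
        frameOperator (fun p : Fin _ × Fin _ => P p.1 ⊗ₖ Q p.2) Z := by
  have hd' : (d : ℂ) ≠ 0 := Nat.cast_ne_zero.mpr hd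
  have hscale : (d : ℂ) ^ 4 / ((d * (d + 1) : ℕ) : ℂ) ^ 2 = (d : ℂ) ^ 2 / ((d : ℂ) + 1) ^ 2 := by
    push_cast
    field_simp
  simp only [mubTmap, frameOperator, hscale, Fintype.sum_prod_type, trace_mul_comm Z]

theorem mubTmap_kronecker (hd : d ≠ 0) (P Q : Fin (d * (d + 1)) → Matrix (Fin d) (Fin d) ℂ)
    (X Y : Matrix (Fin d) (Fin d) ℂ) :
    mubTmap d P Q (X ⊗ₖ Y) =
      ((d : ℂ) ^ 2 / ((d : ℂ) + 1) ^ 2) • (frameOperator P X ⊗ₖ frameOperator Q Y) := by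
  rw [mubTmap_eq_smul_frameOperator hd, frameOperator_kronecker]

theorem mubTmap_eigenspaces_general (hd : d ≠ 0)
    (P Q : Fin (d * (d + 1)) → Matrix (Fin d) (Fin d) ℂ)
    (hPiso : NearIsotropic P) (hQiso : NearIsotropic Q) :
    (∀ X Y : Matrix (Fin d) (Fin d) ℂ, Matrix.trace X = 0 → Matrix.trace Y = 0 →
      mubTmap d P Q (X ⊗ₖ Y) = ((d : ℂ) ^ 2 / ((d : ℂ) + 1) ^ 2) • (X ⊗ₖ Y)) ∧
    (∀ X : Matrix (Fin d) (Fin d) ℂ, Matrix.trace X = 0 →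
      mubTmap d P Q (X ⊗ₖ (1 : Matrix (Fin d) (Fin d) ℂ)) =
        ((d : ℂ) ^ 2 / ((d : ℂ) + 1)) • (X ⊗ₖ (1 : Matrix (Fin d) (Fin d) ℂ))) ∧
    (∀ Y : Matrix (Fin d) (Fin d) ℂ, Matrix.trace Y = 0 →
      mubTmap d P Q ((1 : Matrix (Fin d) (Fin d) ℂ) ⊗ₖ Y) =
        ((d : ℂ) ^ 2 / ((d : ℂ) + 1)) • ((1 : Matrix (Fin d) (Fin d) ℂ) ⊗ₖ Y)) ∧
    (mubTmap d P Q ((1 : Matrix (Fin d) (Fin d) ℂ) ⊗ₖ (1 : Matrix (Fin d) (Fin d) ℂ)) =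
      ((d : ℂ) ^ 2) • ((1 : Matrix (Fin d) (Fin d) ℂ) ⊗ₖ (1 : Matrix (Fin d) (Fin d) ℂ))) := by
  have hd1 : (d : ℂ) + 1 ≠ 0 := Nat.cast_add_one_ne_zero d
  have hdiv : (d : ℂ) ^ 2 / ((d : ℂ) + 1) ^ 2 * ((d : ℂ) + 1) = (d : ℂ) ^ 2 / ((d : ℂ) + 1) := by
    field_simp
  refine ⟨fun X Y hX hY => ?_, fun X hX => ?_, fun Y hY => ?_, ?_⟩
  · rw [mubTmap_kronecker hd, hPiso.frameOperator_eq_self_of_trace_eq_zero hX,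
      hQiso.frameOperator_eq_self_of_trace_eq_zero hY]
  · rw [mubTmap_kronecker hd, hPiso.frameOperator_eq_self_of_trace_eq_zero hX,
      hQiso.frameOperator_one, kronecker_smul, smul_smul, hdiv]
  · rw [mubTmap_kronecker hd, hPiso.frameOperator_one,
      hQiso.frameOperator_eq_self_of_trace_eq_zero hY, smul_kronecker, smul_smul, hdiv]
  · rw [mubTmap_kronecker hd, hPiso.frameOperator_one, hQiso.frameOperator_one, smul_kronecker,
      kronecker_smul, smul_smul, smul_smul, hdiv, div_mul_cancel₀ _ hd1]

end MubTmap

/-- eigenvalues and eigenspaces of the map `T = 𝒜†𝒜` for near-isotropic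
families of rank-one projectors:
(i) traceless ⊗ traceless vectors have eigenvalue `d²/(d+1)²`;
(ii), (iii) traceless ⊗ identity and identity ⊗ traceless have eigenvalue `d²/(d+1)`;
(iv) the identity has eigenvalue `d²`. -/
theorem mubTmap_eigenspaces (d : ℕ) (hd : 2 ≤ d)
    (P Q : Fin (d * (d + 1)) → Matrix (Fin d) (Fin d) ℂ)
    (hPproj : IsRankOneProjFamily P) (hQproj : IsRankOneProjFamily Q)
    (hPiso : NearIsotropic P) (hQiso : NearIsotropic Q) :
    (∀ X Y : Matrix (Fin d) (Fin d) ℂ, Matrix.trace X = 0 → Matrix.trace Y = 0 →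
      mubTmap d P Q (X ⊗ₖ Y) = ((d : ℂ) ^ 2 / ((d : ℂ) + 1) ^ 2) • (X ⊗ₖ Y)) ∧
    (∀ X : Matrix (Fin d) (Fin d) ℂ, Matrix.trace X = 0 →
      mubTmap d P Q (X ⊗ₖ (1 : Matrix (Fin d) (Fin d) ℂ)) =
        ((d : ℂ) ^ 2 / ((d : ℂ) + 1)) • (X ⊗ₖ (1 : Matrix (Fin d) (Fin d) ℂ))) ∧
    (∀ Y : Matrix (Fin d) (Fin d) ℂ, Matrix.trace Y = 0 →
      mubTmap d P Q ((1 : Matrix (Fin d) (Fin d) ℂ) ⊗ₖ Y) =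
        ((d : ℂ) ^ 2 / ((d : ℂ) + 1)) • ((1 : Matrix (Fin d) (Fin d) ℂ) ⊗ₖ Y)) ∧
    (mubTmap d P Q ((1 : Matrix (Fin d) (Fin d) ℂ) ⊗ₖ (1 : Matrix (Fin d) (Fin d) ℂ)) =
      ((d : ℂ) ^ 2) • ((1 : Matrix (Fin d) (Fin d) ℂ) ⊗ₖ (1 : Matrix (Fin d) (Fin d) ℂ))) :=
  mubTmap_eigenspaces_general (by omega) P Q hPiso hQiso
end
end

section
/- Let Φ ∈ M(ℂ^n) be a density matrix and A ∈ M(ℂ^n) Hermitian with Tr(A) = 1. Let A = ∑_{i=1}^n λ_i |v_i⟩⟨v_i| be an eigendecomposition with orthonormal eigenvectors v_i. Let τ satisfy 0 ≤ τ ≤ ‖A − Φ‖_∞. For each i set ν_i = λ_i + τ if λ_i > τ and ν_i = 0 otherwise. Assume ∑_i ν_i ≥ 1 and let x₀ ≥ 0 satisfy ∑_i max(ν_i − x₀, 0) = 1. Then the density matrix B = ∑_i max(ν_i − x₀, 0) |v_i⟩⟨v_i| satisfies ‖B − Φ‖_∞ ≤ 2 ‖A − Φ‖_∞. -/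
noncomputable section
open Matrix Kronecker BigOperators
open scoped ComplexOrder

/-!
Everything reduces to diagonal entries along the eigenvectors `v` of `A`. With `e = ‖A - Φ‖`, the
diagonal entries `pᵢ = ⟪vᵢ, Φ vᵢ⟫` are nonnegative, sum to at most `Tr Φ`, and satisfy
`|λᵢ - pᵢ| ≤ e`. Writing `bᵢ = max (νᵢ - x₀) 0`, it suffices that `|bᵢ - λᵢ| ≤ e` for every `i`:
then `‖B - A‖ ≤ e`, and the triangle inequality finishes. If `x₀ ≤ τ + e` this is an elementary
case check. Otherwise `νᵢ - x₀ ≤ λᵢ - e ≤ pᵢ` on the support of `b`, so `b ≤ p` entrywise, and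
`∑ bᵢ ≥ Tr Φ ≥ ∑ pᵢ` forces `b = p`, whence `|bᵢ - λᵢ| = |pᵢ - λᵢ| ≤ e`.
-/

open InnerProductSpace

/-- The shifted hard threshold taking an eigenvalue `λᵢ` to `νᵢ`: values above `τ` are raised by
`τ`, all others are set to zero. -/
def shiftedThreshold (τ t : ℝ) : ℝ :=
  if τ < t then t + τ else 0

section ScalarEstimates

variable {τ x₀ e : ℝ}

lemma max_shiftedThreshold_sub_le {t p : ℝ} (hp : 0 ≤ p) (htp : t - p ≤ e) (hx₀ : 0 ≤ x₀)
    (hτx₀ : τ + e ≤ x₀) : max (shiftedThreshold τ t - x₀) 0 ≤ p := by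
  refine max_le ?_ hp
  unfold shiftedThreshold
  split_ifs <;> linarith

lemma abs_max_shiftedThreshold_sub_sub_le {t : ℝ} (ht : -e ≤ t) (hτ : τ ≤ e) (hx₀ : 0 ≤ x₀)
    (hx₀τ : x₀ ≤ τ + e) : |max (shiftedThreshold τ t - x₀) 0 - t| ≤ e := by
  unfold shiftedThreshold
  split_ifs with hτt
  · have lower : t + τ - x₀ ≤ max (t + τ - x₀) 0 := le_max_left _ _
    have upper : max (t + τ - x₀) 0 ≤ t + e := max_le (by linarith) (by linarith)
    exact abs_le.2 ⟨by linarith, by linarith⟩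
  · rw [max_eq_right (by linarith)]
    exact abs_le.2 ⟨by linarith, by linarith⟩

theorem abs_max_shiftedThreshold_sub_sub_le_of_sum_le {ι : Type*} [Fintype ι] {lam p : ι → ℝ}
    (hp : ∀ i, 0 ≤ p i) (hlam : ∀ i, |lam i - p i| ≤ e) (hτ : τ ≤ e) (hx₀ : 0 ≤ x₀)
    (hsum : ∑ i, p i ≤ ∑ i, max (shiftedThreshold τ (lam i) - x₀) 0) (i : ι) :
    |max (shiftedThreshold τ (lam i) - x₀) 0 - lam i| ≤ e := by
  rcases le_total x₀ (τ + e) with hx₀τ | hτx₀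
  · have hlam_lower : -e ≤ lam i := by linarith [hp i, neg_le_of_abs_le (hlam i)]
    exact abs_max_shiftedThreshold_sub_sub_le hlam_lower hτ hx₀ hx₀τ
  · have hle : ∀ j ∈ Finset.univ, max (shiftedThreshold τ (lam j) - x₀) 0 ≤ p j := fun j _ =>
      max_shiftedThreshold_sub_le (hp j) (le_of_abs_le (hlam j)) hx₀ hτx₀
    have heq : max (shiftedThreshold τ (lam i) - x₀) 0 = p i :=
      (Finset.sum_eq_sum_iff_of_le hle).1 ((Finset.sum_le_sum hle).antisymm hsum) i
        (Finset.mem_univ i)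
    rw [heq, abs_sub_comm]
    exact hlam i

end ScalarEstimates

section OrthonormalFamilies

variable {𝕜 E ι : Type*} [RCLike 𝕜] [NormedAddCommGroup E] [InnerProductSpace 𝕜 E] [Fintype ι]
  {v : ι → E}

lemma sum_smul_rankOne_apply (v : ι → E) (c : ι → 𝕜) (x : E) :
    (∑ i, c i • rankOne 𝕜 (v i) (v i)) x = ∑ i, (c i * inner 𝕜 (v i) x) • v i := by
  simp only [_root_.sum_apply, _root_.smul_apply, rankOne_apply, smul_smul]

lemma inner_sum_smul_rankOne_apply (hv : Orthonormal 𝕜 v) (c : ι → 𝕜) (i : ι) (x : E) :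
    inner 𝕜 (v i) ((∑ j, c j • rankOne 𝕜 (v j) (v j)) x) = c i * inner 𝕜 (v i) x := by
  rw [sum_smul_rankOne_apply]
  exact hv.inner_right_fintype _ i

theorem norm_sum_smul_rankOne_le (hv : Orthonormal 𝕜 v) {c : ι → 𝕜} {e : ℝ} (he : 0 ≤ e)
    (hc : ∀ i, ‖c i‖ ≤ e) : ‖∑ i, c i • rankOne 𝕜 (v i) (v i)‖ ≤ e := by
  refine ContinuousLinearMap.opNorm_le_bound _ he fun x => le_of_sq_le_sq ?_ (by positivity)
  calc ‖(∑ i, c i • rankOne 𝕜 (v i) (v i)) x‖ ^ 2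
      = ‖∑ i, (c i * inner 𝕜 (v i) x) • v i‖ ^ 2 := by rw [sum_smul_rankOne_apply]
    _ = ∑ i, ‖c i * inner 𝕜 (v i) x‖ ^ 2 :=
        hv.orthogonalFamily.norm_sum (fun i => c i * inner 𝕜 (v i) x) Finset.univ
    _ ≤ ∑ i, e ^ 2 * ‖inner 𝕜 (v i) x‖ ^ 2 := by
        gcongr with i
        rw [norm_mul, mul_pow]
        gcongr
        exact hc i
    _ = e ^ 2 * ∑ i, ‖inner 𝕜 (v i) x‖ ^ 2 := (Finset.mul_sum _ _ _).symm
    _ ≤ (e * ‖x‖) ^ 2 := by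
        rw [mul_pow]
        gcongr
        exact hv.sum_inner_products_le x

theorem sum_re_inner_le_re_trace [FiniteDimensional 𝕜 E] {T : E →ₗ[𝕜] E} (hT : T.IsPositive)
    (hv : Orthonormal 𝕜 v) :
    ∑ i, RCLike.re (inner 𝕜 (v i) (T (v i))) ≤ RCLike.re (T.trace 𝕜 E) := by
  classical
  obtain ⟨u, b, hvu, hb⟩ := hv.toSubtypeRange.exists_orthonormalBasis_extension
  have himage : Finset.univ.image v ⊆ u := by
    simpa [Finset.image_subset_iff, Set.range_subset_iff] using hvu
  calc ∑ i, RCLike.re (inner 𝕜 (v i) (T (v i)))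
      = ∑ w ∈ Finset.univ.image v, RCLike.re (inner 𝕜 w (T w)) :=
        (Finset.sum_image (f := fun w => RCLike.re (inner 𝕜 w (T w)))
          hv.linearIndependent.injective.injOn).symm
    _ ≤ ∑ w ∈ u, RCLike.re (inner 𝕜 w (T w)) :=
        Finset.sum_le_sum_of_subset_of_nonneg himage fun w _ _ => hT.re_inner_nonneg_right w
    _ = RCLike.re (T.trace 𝕜 E) := by
        rw [T.trace_eq_sum_inner b, map_sum, hb]
        exact (Finset.sum_coe_sort u fun w => RCLike.re (inner 𝕜 w (T w))).symm

lemma abs_sub_re_inner_le_norm_sub (hv : Orthonormal 𝕜 v) (lam : ι → ℝ) (T : E →L[𝕜] E) (i : ι) :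
    |lam i - RCLike.re (inner 𝕜 (v i) (T (v i)))|
      ≤ ‖∑ j, (lam j : 𝕜) • rankOne 𝕜 (v j) (v j) - T‖ := by
  set D := ∑ j, (lam j : 𝕜) • rankOne 𝕜 (v j) (v j) - T
  have hentry : RCLike.re (inner 𝕜 (v i) (D (v i)))
      = lam i - RCLike.re (inner 𝕜 (v i) (T (v i))) := by
    rw [_root_.sub_apply, inner_sub_right, inner_sum_smul_rankOne_apply hv]
    simp [hv.1 i]
  calc |lam i - RCLike.re (inner 𝕜 (v i) (T (v i)))|
      ≤ ‖inner 𝕜 (v i) (D (v i))‖ := hentry ▸ RCLike.abs_re_le_norm _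
    _ ≤ ‖v i‖ * ‖D (v i)‖ := norm_inner_le_norm _ _
    _ ≤ ‖D‖ := by simpa [hv.1 i] using D.le_opNorm (v i)

theorem thresholded_projection_opNorm_bound_general [FiniteDimensional 𝕜 E] {Φ A : E →L[𝕜] E}
    (hΦ : Φ.IsPositive) (hv : Orthonormal 𝕜 v) {lam : ι → ℝ}
    (hA : A = ∑ i, (lam i : 𝕜) • rankOne 𝕜 (v i) (v i)) {τ x₀ : ℝ} (hτ : τ ≤ ‖A - Φ‖)
    (hx₀ : 0 ≤ x₀)
    (hsum : RCLike.re (LinearMap.trace 𝕜 E Φ) ≤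
      ∑ i, max (shiftedThreshold τ (lam i) - x₀) 0) :
    ‖∑ i, ((max (shiftedThreshold τ (lam i) - x₀) 0 : ℝ) : 𝕜) • rankOne 𝕜 (v i) (v i) - Φ‖
      ≤ 2 * ‖A - Φ‖ := by
  set B := ∑ i, ((max (shiftedThreshold τ (lam i) - x₀) 0 : ℝ) : 𝕜) • rankOne 𝕜 (v i) (v i)
  have hweights : ∀ i, |max (shiftedThreshold τ (lam i) - x₀) 0 - lam i| ≤ ‖A - Φ‖ :=
    abs_max_shiftedThreshold_sub_sub_le_of_sum_le (fun i => hΦ.re_inner_nonneg_right (v i))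
      (fun i => hA ▸ abs_sub_re_inner_le_norm_sub hv lam Φ i) hτ hx₀
      ((sum_re_inner_le_re_trace hΦ.toLinearMap hv).trans hsum)
  have hBA : ‖B - A‖ ≤ ‖A - Φ‖ := by
    simp only [B, hA, ← Finset.sum_sub_distrib, ← sub_smul, ← RCLike.ofReal_sub] at hweights ⊢
    exact norm_sum_smul_rankOne_le hv (norm_nonneg _) fun i => by
      simpa only [RCLike.norm_ofReal] using hweights i
  calc ‖B - Φ‖ ≤ ‖B - A‖ + ‖A - Φ‖ := norm_sub_le_norm_sub_add_norm_sub B A Φ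
    _ ≤ 2 * ‖A - Φ‖ := by linarith

end OrthonormalFamilies

section Matrices

variable {n : Type*} [Fintype n] [DecidableEq n]

lemma toEuclideanCLM_outer (v : EuclideanSpace ℂ n) :
    toEuclideanCLM (𝕜 := ℂ) (outer v) = rankOne ℂ v v := by
  ext x i
  simp only [outer, ofLp_toEuclideanCLM, mulVec, dotProduct, of_apply, rankOne_apply,
    PiLp.smul_apply, smul_eq_mul, PiLp.inner_apply, RCLike.inner_apply, Finset.sum_mul]
  exact Finset.sum_congr rfl fun j _ => by ring

lemma toEuclideanCLM_sum_smul_outer {ι : Type*} [Fintype ι] (c : ι → ℂ)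
    (v : ι → EuclideanSpace ℂ n) :
    toEuclideanCLM (𝕜 := ℂ) (∑ i, c i • outer (v i)) = ∑ i, c i • rankOne ℂ (v i) (v i) := by
  simp only [map_sum, map_smul, toEuclideanCLM_outer]

variable {𝕜 : Type*} [RCLike 𝕜]

lemma isPositive_toEuclideanCLM_iff {M : Matrix n n 𝕜} :
    (toEuclideanCLM (𝕜 := 𝕜) M).IsPositive ↔ M.PosSemidef :=
  (ContinuousLinearMap.isPositive_toLinearMap_iff _).symm.trans isPositive_toEuclideanLin_iff

lemma trace_toEuclideanCLM (M : Matrix n n 𝕜) :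
    LinearMap.trace 𝕜 (EuclideanSpace 𝕜 n) (toEuclideanCLM (𝕜 := 𝕜) M) = M.trace := by
  rw [coe_toEuclideanCLM_eq_toEuclideanLin, toEuclideanLin_eq_toLin_orthonormal, trace_toLin_eq]

end Matrices

/-- Lemma 2, main branch of Algorithm 1: operator-norm stability of the
thresholded projection onto trace-one positive semidefinite matrices.  If `A` is Hermitian of
trace one with eigendecomposition `A = ∑ λᵢ |vᵢ⟩⟨vᵢ|`, `0 ≤ τ ≤ ‖A − Φ‖_∞`, the thresholded
eigenvalues `νᵢ = λᵢ + τ` (if `λᵢ > τ`, else `0`) satisfy `∑ νᵢ ≥ 1`, and `x₀ ≥ 0` is a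
water-filling level with `∑ max(νᵢ − x₀, 0) = 1`, then the resulting density matrix
`B = ∑ max(νᵢ − x₀, 0) |vᵢ⟩⟨vᵢ|` satisfies `‖B − Φ‖_∞ ≤ 2‖A − Φ‖_∞`. -/
theorem thresholded_projection_opNorm_bound (n : ℕ)
    (Φ A : Matrix (Fin n) (Fin n) ℂ)
    (hΦ : IsDensity Φ) (hA : A.IsHermitian) (hAtr : A.trace = 1)
    (lam : Fin n → ℝ) (v : Fin n → EuclideanSpace ℂ (Fin n)) (hv : Orthonormal ℂ v)
    (hAeig : A = ∑ i, (lam i : ℂ) • outer (v i))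
    (τ : ℝ) (hτ0 : 0 ≤ τ) (hτ : τ ≤ opNorm (A - Φ))
    (ν : Fin n → ℝ) (hν : ∀ i, ν i = if τ < lam i then lam i + τ else 0)
    (hνsum : 1 ≤ ∑ i, ν i)
    (x₀ : ℝ) (hx₀ : 0 ≤ x₀) (hx₀sum : ∑ i, max (ν i - x₀) 0 = 1) :
    opNorm ((∑ i, (↑(max (ν i - x₀) 0) : ℂ) • outer (v i)) - Φ) ≤ 2 * opNorm (A - Φ) := by
  obtain rfl : ν = fun i => shiftedThreshold τ (lam i) := funext hν
  simp only [opNorm, map_sub, toEuclideanCLM_sum_smul_outer] at hτ ⊢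
  exact thresholded_projection_opNorm_bound_general (isPositive_toEuclideanCLM_iff.2 hΦ.1) hv
    (hAeig ▸ toEuclideanCLM_sum_smul_outer _ v) hτ hx₀
    (by rw [trace_toEuclideanCLM, hΦ.2, hx₀sum, RCLike.one_re])
end
end

section
/- Let (Ω, ℙ) be a probability space, n ≥ 1, r ≥ 1, K > 0, c > 0. Let Φ ∈ M(ℂ^n) be a density matrix of rank at most r, and let L, C, S : Ω → M(ℂ^n) be measurable matrix-valued maps such that: (a) for every τ ∈ [0,1], ℙ( ‖L − Φ‖_∞ ≥ τ ) ≤ K e^{−c τ²}; (b) for every ω, C(ω) is a density matrix, ‖C(ω) − Φ‖_∞ ≤ 2 ‖L(ω) − Φ‖_∞, and ‖S(ω) − Φ‖₂ ≤ ‖C(ω) − Φ‖₂. Then for every ε ∈ (0,1], ℙ( ‖S − Φ‖₂ ≥ ε ) ≤ K e^{−c ε² / (8r)}. -/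
noncomputable section
open Matrix Kronecker BigOperators
open scoped ComplexOrder

/-- Matrices inherit the (Borel) product measurable structure of `m → n → ℂ`. -/
instance matrixMeasurableSpace {m n : Type*} : MeasurableSpace (Matrix m n ℂ) :=
  inferInstanceAs (MeasurableSpace (m → n → ℂ))

/-! `A = ρ - σ` has at most `rank σ` negative eigenvalues, because `A + σ = ρ` is positive
semidefinite while `-A` is positive definite on the span of the eigenvectors with negative
eigenvalue. Every eigenvalue satisfies `|x| ≤ M = ‖A‖_∞`, so `x² ≤ M x` if `x ≥ 0` and
`x² ≤ M x + 2 M²` if `x < 0`; summing and using `Tr A ≤ 0` gives `‖A‖₂² ≤ 2 (rank σ) M²`.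
For `ρ = C ω` and `σ = Φ` the assumptions on `C` and `S` turn this into
`‖S ω - Φ‖₂ ≤ √(8r) ‖L ω - Φ‖_∞`, and the tail bound is used at `τ = ε / √(8r)`. -/

theorem sum_sq_le_two_mul_card_neg_mul_sq {ι : Type*} {s : Finset ι} {x : ι → ℝ} {M : ℝ}
    (hM : 0 ≤ M) (hx : ∀ i ∈ s, |x i| ≤ M) (hsum : ∑ i ∈ s, x i ≤ 0) :
    ∑ i ∈ s, x i ^ 2 ≤ 2 * (s.filter (x · < 0)).card * M ^ 2 := by
  have sq_le : ∀ i ∈ s, x i ^ 2 ≤ M * x i + if x i < 0 then 2 * M ^ 2 else 0 := by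
    intro i hi
    have := abs_le.mp (hx i hi)
    split_ifs <;> nlinarith
  calc ∑ i ∈ s, x i ^ 2
      ≤ ∑ i ∈ s, (M * x i + if x i < 0 then 2 * M ^ 2 else 0) := Finset.sum_le_sum sq_le
    _ = M * ∑ i ∈ s, x i + 2 * (s.filter (x · < 0)).card * M ^ 2 := by
      rw [Finset.sum_add_distrib, ← Finset.mul_sum, ← Finset.sum_filter, Finset.sum_const,
        nsmul_eq_mul]
      ring
    _ ≤ 2 * (s.filter (x · < 0)).card * M ^ 2 :=
      add_le_of_nonpos_left (mul_nonpos_of_nonneg_of_nonpos hM hsum)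

theorem card_le_rank_of_isUnit_mul_mul {R κ m n : Type*} [CommSemiring R] [StrongRankCondition R]
    [Fintype κ] [DecidableEq κ] [Fintype m] [Fintype n] {W : Matrix κ m R} {B : Matrix m n R}
    {V : Matrix n κ R} (h : IsUnit (W * B * V)) : Fintype.card κ ≤ B.rank :=
  calc Fintype.card κ = (W * B * V).rank := (rank_of_isUnit _ h).symm
    _ ≤ (W * B).rank := rank_mul_le_left _ _
    _ ≤ B.rank := rank_mul_le_right _ _

section Hermitian

variable {𝕜 ι : Type*} [RCLike 𝕜] [Fintype ι] [DecidableEq ι] {A B : Matrix ι ι 𝕜}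

theorem sum_eigenvalues_nonpos (hA : A.IsHermitian) (htr : A.trace ≤ 0) :
    ∑ i, hA.eigenvalues i ≤ 0 := by
  rwa [hA.trace_eq_sum_eigenvalues, ← RCLike.ofReal_sum, RCLike.ofReal_nonpos] at htr

theorem trace_mul_self_eq_sum_eigenvalues_sq (hA : A.IsHermitian) :
    (A * A).trace = ((∑ i, hA.eigenvalues i ^ 2 : ℝ) : 𝕜) := by
  conv_lhs => rw [hA.spectral_theorem, ← map_mul, Unitary.conjStarAlgAut_apply,
    trace_mul_cycle, Unitary.coe_star_mul_self, one_mul, diagonal_mul_diagonal, trace_diagonal]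
  simp [sq]

theorem conjTranspose_mul_mul_submatrix_eigenvectorUnitary {κ : Type*} [DecidableEq κ]
    (hA : A.IsHermitian) {f : κ → ι} (hf : f.Injective) :
    ((hA.eigenvectorUnitary : Matrix ι ι 𝕜).submatrix id f)ᴴ * A *
        (hA.eigenvectorUnitary : Matrix ι ι 𝕜).submatrix id f =
      diagonal fun k ↦ (hA.eigenvalues (f k) : 𝕜) := by
  have hdiag := hA.conjStarAlgAut_star_eigenvectorUnitary
  rw [Unitary.conjStarAlgAut_star_apply] at hdiag
  calc _ = (star (hA.eigenvectorUnitary : Matrix ι ι 𝕜) * A *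
        (hA.eigenvectorUnitary : Matrix ι ι 𝕜)).submatrix f f := by
        ext i j
        simp [mul_apply]
    _ = _ := by
        rw [hdiag, submatrix_diagonal _ _ hf]
        rfl

theorem card_neg_eigenvalues_le_rank (hA : A.IsHermitian) (hAB : (A + B).PosSemidef) :
    (Finset.univ.filter (hA.eigenvalues · < 0)).card ≤ B.rank := by
  let V : Matrix ι {i // hA.eigenvalues i < 0} 𝕜 :=
    (hA.eigenvectorUnitary : Matrix ι ι 𝕜).submatrix id Subtype.val
  have hV : Vᴴ * A * V = diagonal fun i ↦ (hA.eigenvalues i.1 : 𝕜) :=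
    conjTranspose_mul_mul_submatrix_eigenvectorUnitary hA Subtype.val_injective
  have hneg : (-(Vᴴ * A * V)).PosDef := by
    rw [hV, diagonal_neg]
    exact .diagonal fun i ↦ by simpa using i.2
  have hB : Vᴴ * B * V = -(Vᴴ * A * V) + Vᴴ * (A + B) * V := by
    rw [Matrix.mul_add, Matrix.add_mul, neg_add_cancel_left]
  have hVBV : (Vᴴ * B * V).PosDef := by
    rw [hB]
    exact hneg.add_posSemidef (hAB.conjTranspose_mul_mul_same V)
  rw [← Fintype.card_subtype]
  exact card_le_rank_of_isUnit_mul_mul hVBV.isUnit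

end Hermitian

section Norms

variable {ι : Type*} [Fintype ι] [DecidableEq ι] {A ρ σ : Matrix ι ι ℂ}

theorem opNorm_nonneg (A : Matrix ι ι ℂ) : 0 ≤ opNorm A :=
  norm_nonneg _

open scoped Matrix.Norms.L2Operator in
theorem abs_eigenvalues_le_opNorm (hA : A.IsHermitian) (i : ι) :
    |hA.eigenvalues i| ≤ opNorm A :=
  have : Nonempty ι := ⟨i⟩
  spectrum.norm_le_norm_of_mem (hA.eigenvalues_mem_spectrum_real i)

theorem frobNorm_sq_eq_sum_eigenvalues_sq (hA : A.IsHermitian) :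
    frobNorm A ^ 2 = ∑ i, hA.eigenvalues i ^ 2 := by
  rw [frobNorm, hA.eq, trace_mul_self_eq_sum_eigenvalues_sq hA]
  exact Real.sq_sqrt (Finset.sum_nonneg fun i _ ↦ sq_nonneg _)

theorem frobNorm_sub_le_sqrt_two_mul_rank_mul_opNorm_sub (hρ : ρ.PosSemidef)
    (hσ : σ.IsHermitian) (htr : ρ.trace ≤ σ.trace) :
    frobNorm (ρ - σ) ≤ √(2 * σ.rank) * opNorm (ρ - σ) := by
  have hA : (ρ - σ).IsHermitian := hρ.isHermitian.sub hσ
  have hsum : ∑ i, hA.eigenvalues i ≤ 0 :=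
    sum_eigenvalues_nonpos hA (by rwa [trace_sub, sub_nonpos])
  have hcard : (Finset.univ.filter (hA.eigenvalues · < 0)).card ≤ σ.rank :=
    card_neg_eigenvalues_le_rank hA (by rwa [sub_add_cancel])
  refine le_of_sq_le_sq ?_ (mul_nonneg (Real.sqrt_nonneg _) (opNorm_nonneg _))
  calc frobNorm (ρ - σ) ^ 2 = ∑ i, hA.eigenvalues i ^ 2 := frobNorm_sq_eq_sum_eigenvalues_sq hA
    _ ≤ 2 * (Finset.univ.filter (hA.eigenvalues · < 0)).card * opNorm (ρ - σ) ^ 2 :=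
      sum_sq_le_two_mul_card_neg_mul_sq (opNorm_nonneg _)
        (fun i _ ↦ abs_eigenvalues_le_opNorm hA i) hsum
    _ ≤ 2 * σ.rank * opNorm (ρ - σ) ^ 2 := by gcongr
    _ = (√(2 * σ.rank) * opNorm (ρ - σ)) ^ 2 := by
      rw [mul_pow, Real.sq_sqrt (by positivity)]

end Norms

open MeasureTheory in
theorem pls_frobenius_concentration_general {Ω ι : Type*} [MeasurableSpace Ω] (μ : Measure Ω)
    [Fintype ι] [DecidableEq ι] {r : ℕ} (hr : 0 < r) {K c : ℝ} {Φ : Matrix ι ι ℂ}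
    (hΦ : Φ.IsHermitian) (hΦr : Φ.rank ≤ r) {L C S : Ω → Matrix ι ι ℂ}
    (hL : ∀ τ ∈ Set.Icc (0 : ℝ) 1,
      μ {ω | τ ≤ opNorm (L ω - Φ)} ≤ ENNReal.ofReal (K * Real.exp (-c * τ ^ 2)))
    (hC : ∀ᵐ ω ∂μ, (C ω).PosSemidef ∧ (C ω).trace ≤ Φ.trace)
    (hCL : ∀ᵐ ω ∂μ, opNorm (C ω - Φ) ≤ 2 * opNorm (L ω - Φ))
    (hSC : ∀ᵐ ω ∂μ, frobNorm (S ω - Φ) ≤ frobNorm (C ω - Φ))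
    {ε : ℝ} (hε : ε ∈ Set.Icc 0 √(8 * r)) :
    μ {ω | ε ≤ frobNorm (S ω - Φ)} ≤
      ENNReal.ofReal (K * Real.exp (-c * ε ^ 2 / (8 * r))) := by
  have hs : 0 < √(8 * r : ℝ) := by positivity
  have hsqrt : √(8 * r : ℝ) = 2 * √(2 * r) := by
    rw [show (8 * r : ℝ) = 2 ^ 2 * (2 * r) by ring, Real.sqrt_mul (by positivity),
      Real.sqrt_sq zero_le_two]
  have hbound : ∀ᵐ ω ∂μ, frobNorm (S ω - Φ) ≤ opNorm (L ω - Φ) * √(8 * r) := by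
    filter_upwards [hC, hCL, hSC] with ω ⟨hpos, htr⟩ hCLω hSCω
    calc frobNorm (S ω - Φ) ≤ frobNorm (C ω - Φ) := hSCω
      _ ≤ √(2 * Φ.rank) * opNorm (C ω - Φ) :=
        frobNorm_sub_le_sqrt_two_mul_rank_mul_opNorm_sub hpos hΦ htr
      _ ≤ √(2 * r) * (2 * opNorm (L ω - Φ)) := by
        gcongr
        exact opNorm_nonneg _
      _ = opNorm (L ω - Φ) * √(8 * r) := by
        rw [hsqrt]
        ring
  calc μ {ω | ε ≤ frobNorm (S ω - Φ)} ≤ μ {ω | ε / √(8 * r) ≤ opNorm (L ω - Φ)} :=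
      measure_mono_ae <| hbound.mono fun ω hω hεω ↦ (div_le_iff₀ hs).mpr (hεω.trans hω)
    _ ≤ ENNReal.ofReal (K * Real.exp (-c * (ε / √(8 * r)) ^ 2)) :=
      hL _ ⟨div_nonneg hε.1 hs.le, (div_le_one hs).mpr hε.2⟩
    _ = ENNReal.ofReal (K * Real.exp (-c * ε ^ 2 / (8 * r))) := by
      rw [div_pow, Real.sq_sqrt (by positivity), mul_div_assoc]

open MeasureTheory in
/-- Frobenius-error concentration, Theorem 1 eq. (3): if the least-squares
estimator `L` of a rank-`r` density matrix `Φ` satisfies the operator-norm tail bound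
`ℙ(‖L − Φ‖_∞ ≥ τ) ≤ K e^{−cτ²}` for all `τ ∈ [0,1]`, the intermediate estimator `C` is a
density matrix with `‖C − Φ‖_∞ ≤ 2‖L − Φ‖_∞` pointwise, and `S` satisfies
`‖S − Φ‖₂ ≤ ‖C − Φ‖₂` pointwise, then `ℙ(‖S − Φ‖₂ ≥ ε) ≤ K e^{−cε²/(8r)}` for `ε ∈ (0,1]`. -/
theorem pls_frobenius_concentration {Ω : Type*} [MeasurableSpace Ω] (ℙ : Measure Ω)
    [IsProbabilityMeasure ℙ] (n r : ℕ) (hn : 1 ≤ n) (hr : 1 ≤ r) (K c : ℝ)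
    (hK : 0 < K) (hc : 0 < c)
    (Φ : Matrix (Fin n) (Fin n) ℂ) (hΦ : IsDensity Φ) (hΦr : Φ.rank ≤ r)
    (L C S : Ω → Matrix (Fin n) (Fin n) ℂ)
    (hL : Measurable L) (hC : Measurable C) (hS : Measurable S)
    (ha : ∀ τ : ℝ, τ ∈ Set.Icc (0 : ℝ) 1 →
      ℙ {ω | τ ≤ opNorm (L ω - Φ)} ≤ ENNReal.ofReal (K * Real.exp (-c * τ ^ 2)))
    (hb : ∀ ω, IsDensity (C ω) ∧ opNorm (C ω - Φ) ≤ 2 * opNorm (L ω - Φ) ∧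
      frobNorm (S ω - Φ) ≤ frobNorm (C ω - Φ)) :
    ∀ ε : ℝ, ε ∈ Set.Ioc (0 : ℝ) 1 →
      ℙ {ω | ε ≤ frobNorm (S ω - Φ)} ≤
        ENNReal.ofReal (K * Real.exp (-c * ε ^ 2 / (8 * r))) := by
  rintro ε ⟨hε₀, hε₁⟩
  have hε : ε ≤ √(8 * r) := hε₁.trans (Real.one_le_sqrt.mpr (by norm_cast; lia))
  exact pls_frobenius_concentration_general ℙ hr hΦ.1.isHermitian hΦr ha
    (.of_forall fun ω ↦ ⟨(hb ω).1.1, ((hb ω).1.2.trans hΦ.2.symm).le⟩)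
    (.of_forall fun ω ↦ (hb ω).2.1) (.of_forall fun ω ↦ (hb ω).2.2) ⟨hε₀.le, hε⟩
end
end

section
/- Let (Ω, ℙ) be a probability space, n ≥ 1, r ≥ 1, K > 0, c > 0. Let Φ ∈ M(ℂ^n) be a density matrix of rank at most r, and let L, C, S : Ω → M(ℂ^n) be measurable matrix-valued maps such that: (a) for every τ ∈ [0,1], ℙ( ‖L − Φ‖_∞ ≥ τ ) ≤ K e^{−c τ²}; (b) for every ω, C(ω) and S(ω) are density matrices, ‖C(ω) − Φ‖_∞ ≤ 2 ‖L(ω) − Φ‖_∞, and ‖S(ω) − Φ‖₂ ≤ ‖C(ω) − Φ‖₂. Then for every ε ∈ (0,1], ℙ( ‖S − Φ‖₁ ≥ ε ) ≤ K e^{−c ε² / (32 r²)}. -/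
noncomputable section
open Matrix Kronecker BigOperators
open scoped ComplexOrder

/-!
If `A` is positive semidefinite, `A - B` has at most `rank B` negative eigenvalues, because
`B = A - (A - B)` is positive definite on the span of the corresponding eigenvectors. If moreover
`A` and `B` have the same trace, the eigenvalues of `A - B` sum to zero, so those few negative ones
carry half of `‖A - B‖₁`. Up to factors depending only on `rank B`, the trace norm is therefore
controlled by the Frobenius norm and the Frobenius norm by the operator norm:
`‖S - Φ‖₁ ≤ 2√r ‖S - Φ‖₂ ≤ 2√r ‖C - Φ‖₂ ≤ 2√r √(2r) ‖C - Φ‖_∞ ≤ 4√2 r ‖L - Φ‖_∞`.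
-/

section ZeroSum

open Finset

variable {ι R : Type*} [CommRing R] [LinearOrder R] [IsStrictOrderedRing R] {s : Finset ι}

theorem sum_abs_eq_two_mul_sum_abs_filter_neg {f : ι → R} (hf : ∑ i ∈ s, f i = 0) :
    ∑ i ∈ s, |f i| = 2 * ∑ i ∈ s with f i < 0, |f i| := by
  have abs_eq (i : ι) : |f i| = f i + 2 * if f i < 0 then |f i| else 0 := by
    split_ifs with hi
    · rw [abs_of_neg hi]; ring
    · rw [abs_of_nonneg (not_lt.1 hi)]; ring
  calc ∑ i ∈ s, |f i| = ∑ i ∈ s, (f i + 2 * if f i < 0 then |f i| else 0) :=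
        sum_congr rfl fun i _ => abs_eq i
    _ = 2 * ∑ i ∈ s with f i < 0, |f i| := by
        rw [sum_add_distrib, hf, zero_add, ← mul_sum, sum_filter]

theorem sq_sum_abs_le_four_mul_card_neg_mul_sum_sq {f : ι → R} (hf : ∑ i ∈ s, f i = 0) :
    (∑ i ∈ s, |f i|) ^ 2 ≤ 4 * #{i ∈ s | f i < 0} * ∑ i ∈ s, f i ^ 2 :=
  calc (∑ i ∈ s, |f i|) ^ 2 = 4 * (∑ i ∈ s with f i < 0, |f i|) ^ 2 := by
        rw [sum_abs_eq_two_mul_sum_abs_filter_neg hf]; ring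
    _ ≤ 4 * (#{i ∈ s | f i < 0} * ∑ i ∈ s with f i < 0, |f i| ^ 2) := by
        gcongr; exact sq_sum_le_card_mul_sum_sq
    _ ≤ 4 * (#{i ∈ s | f i < 0} * ∑ i ∈ s, |f i| ^ 2) := by
        gcongr; exact filter_subset _ _
    _ = 4 * #{i ∈ s | f i < 0} * ∑ i ∈ s, f i ^ 2 := by
        simp only [sq_abs, mul_assoc]

theorem sum_sq_le_two_mul_card_neg_mul_sq_s11 {f : ι → R} {M : R} (hf : ∑ i ∈ s, f i = 0)
    (hfM : ∀ i ∈ s, |f i| ≤ M) :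
    ∑ i ∈ s, f i ^ 2 ≤ 2 * #{i ∈ s | f i < 0} * M ^ 2 :=
  calc ∑ i ∈ s, f i ^ 2 = ∑ i ∈ s, |f i| * |f i| := by simp only [abs_mul_abs_self, sq]
    _ ≤ ∑ i ∈ s, M * |f i| := by gcongr with i hi; exact hfM i hi
    _ = 2 * ∑ i ∈ s with f i < 0, M * |f i| := by
        rw [← mul_sum, ← mul_sum, sum_abs_eq_two_mul_sum_abs_filter_neg hf]; ring
    _ ≤ 2 * (#{i ∈ s | f i < 0} • M ^ 2) := by
        gcongr
        refine sum_le_card_nsmul _ _ _ fun i hi => ?_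
        have hi' := hfM i (mem_filter.1 hi).1
        exact (mul_le_mul_of_nonneg_left hi' ((abs_nonneg _).trans hi')).trans_eq (sq M).symm
    _ = 2 * #{i ∈ s | f i < 0} * M ^ 2 := by rw [nsmul_eq_mul, mul_assoc]

end ZeroSum

theorem card_le_rank_of_posDef_conjTranspose_mul_mul {𝕜 m k : Type*} [RCLike 𝕜] [Fintype m]
    [Fintype k] {B : Matrix m m 𝕜} {V : Matrix m k 𝕜} (hV : (Vᴴ * B * V).PosDef) :
    Fintype.card k ≤ B.rank := by
  classical
  calc Fintype.card k = (Vᴴ * B * V).rank := (rank_of_isUnit _ hV.isUnit).symm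
    _ ≤ (Vᴴ * B).rank := rank_mul_le_left _ _
    _ ≤ B.rank := rank_mul_le_right _ _

section Eigenvalues

open scoped Finset

variable {𝕜 m k : Type*} [RCLike 𝕜] [Fintype m] [DecidableEq m] [DecidableEq k]
  {A B X : Matrix m m 𝕜}

theorem conjTranspose_mul_mul_submatrix_eigenvectorUnitary_s11 (hX : X.IsHermitian) {f : k → m}
    (hf : f.Injective) :
    ((hX.eigenvectorUnitary : Matrix m m 𝕜).submatrix id f)ᴴ * X *
        (hX.eigenvectorUnitary : Matrix m m 𝕜).submatrix id f =
      diagonal fun i => (hX.eigenvalues (f i) : 𝕜) := by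
  set U := (hX.eigenvectorUnitary : Matrix m m 𝕜)
  have diagonalization : Uᴴ * X * U = diagonal fun i => (hX.eigenvalues i : 𝕜) := by
    simpa [Unitary.conjStarAlgAut_apply, star_eq_conjTranspose, Function.comp_def] using
      hX.conjStarAlgAut_star_eigenvectorUnitary
  calc (U.submatrix id f)ᴴ * X * U.submatrix id f = (Uᴴ * X * U).submatrix f f := by
        rw [submatrix_mul _ _ f id f Function.bijective_id,
          submatrix_mul _ _ f id id Function.bijective_id, submatrix_id_id,
          conjTranspose_submatrix]
    _ = diagonal fun i => (hX.eigenvalues (f i) : 𝕜) := by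
        rw [diagonalization, submatrix_diagonal _ _ hf]; rfl

theorem card_neg_eigenvalues_sub_le_rank (hA : A.PosSemidef) (hAB : (A - B).IsHermitian) :
    #{i | hAB.eigenvalues i < 0} ≤ B.rank := by
  let V : Matrix m {i // hAB.eigenvalues i < 0} 𝕜 :=
    (hAB.eigenvectorUnitary : Matrix m m 𝕜).submatrix id Subtype.val
  let d : {i // hAB.eigenvalues i < 0} → 𝕜 := fun i => hAB.eigenvalues i
  have diagonalization : Vᴴ * (A - B) * V = diagonal d :=
    conjTranspose_mul_mul_submatrix_eigenvectorUnitary_s11 hAB Subtype.val_injective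
  have hB : Vᴴ * B * V = diagonal (fun i => -d i) + Vᴴ * A * V := by
    rw [← diagonal_neg, ← diagonalization, Matrix.mul_sub, Matrix.sub_mul, neg_sub, sub_add_cancel]
  have neg_d_pos (i) : 0 < -d i := by simpa only [d, neg_pos, RCLike.ofReal_lt_zero] using i.2
  have posDef : (Vᴴ * B * V).PosDef :=
    hB ▸ (PosDef.diagonal neg_d_pos).add_posSemidef (hA.conjTranspose_mul_mul_same V)
  rw [← Fintype.card_subtype]
  exact card_le_rank_of_posDef_conjTranspose_mul_mul posDef

theorem trace_cfc_eq_sum_eigenvalues (hX : X.IsHermitian) (f : ℝ → ℝ) :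
    (cfc f X).trace = ∑ i, (f (hX.eigenvalues i) : 𝕜) := by
  rw [hX.cfc_eq, IsHermitian.cfc, Unitary.conjStarAlgAut_apply, trace_mul_comm, ← mul_assoc,
    Unitary.coe_star_mul_self, one_mul, trace_diagonal]
  rfl

theorem sum_eigenvalues_eq_zero_of_trace_eq_zero (hX : X.IsHermitian) (htr : X.trace = 0) :
    ∑ i, hX.eigenvalues i = 0 := by
  rw [hX.trace_eq_sum_eigenvalues] at htr
  exact_mod_cast htr

end Eigenvalues

section Norms

open scoped Finset

variable {m : Type*} [Fintype m] [DecidableEq m] {A B X : Matrix m m ℂ}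

theorem opNorm_nonneg_s11 (X : Matrix m m ℂ) : 0 ≤ opNorm X :=
  norm_nonneg _

open scoped MatrixOrder in
theorem traceNorm_eq_sum_abs_eigenvalues (hX : X.IsHermitian) :
    traceNorm X = ∑ i, |hX.eigenvalues i| := by
  have sqrt_eq : CFC.sqrt (Xᴴ * X) = cfc (‖·‖) X := CFC.abs_eq_cfc_norm X hX
  simp [traceNorm, sqrt_eq, trace_cfc_eq_sum_eigenvalues hX]

theorem frobNorm_eq_sqrt_sum_sq_eigenvalues (hX : X.IsHermitian) :
    frobNorm X = √(∑ i, hX.eigenvalues i ^ 2) := by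
  have sq_eq : Xᴴ * X = cfc (· ^ 2 : ℝ → ℝ) X := by
    rw [hX.eq, ← sq]
    exact (cfc_pow_id X 2 hX).symm
  rw [frobNorm, sq_eq, trace_cfc_eq_sum_eigenvalues hX]
  norm_cast

theorem abs_eigenvalues_le_opNorm_s11 (hX : X.IsHermitian) (i : m) :
    |hX.eigenvalues i| ≤ opNorm X := by
  have : Nonempty m := ⟨i⟩
  have mem_spectrum : (hX.eigenvalues i : ℂ) ∈ spectrum ℂ (toEuclideanCLM (𝕜 := ℂ) X) := by
    rw [AlgEquiv.spectrum_eq, hX.spectrum_eq_image_range]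
    exact Set.mem_image_of_mem _ (Set.mem_range_self i)
  simpa [opNorm] using spectrum.norm_le_norm_of_mem mem_spectrum

theorem traceNorm_sub_le_mul_frobNorm_sub {r : ℕ} (hA : A.PosSemidef) (hB : B.IsHermitian)
    (hr : B.rank ≤ r) (htr : A.trace = B.trace) :
    traceNorm (A - B) ≤ 2 * √r * frobNorm (A - B) := by
  have hAB : (A - B).IsHermitian := hA.isHermitian.sub hB
  have sum_eq := sum_eigenvalues_eq_zero_of_trace_eq_zero hAB (trace_sub A B ▸ sub_eq_zero.2 htr)
  rw [traceNorm_eq_sum_abs_eigenvalues hAB, frobNorm_eq_sqrt_sum_sq_eigenvalues hAB]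
  refine (sq_le_sq₀ (by positivity) (by positivity)).1 ?_
  calc (∑ i, |hAB.eigenvalues i|) ^ 2
      ≤ 4 * #{i | hAB.eigenvalues i < 0} * ∑ i, hAB.eigenvalues i ^ 2 :=
        sq_sum_abs_le_four_mul_card_neg_mul_sum_sq sum_eq
    _ ≤ 4 * r * ∑ i, hAB.eigenvalues i ^ 2 := by
        gcongr; exact (card_neg_eigenvalues_sub_le_rank hA hAB).trans hr
    _ = (2 * √r * √(∑ i, hAB.eigenvalues i ^ 2)) ^ 2 := by
        rw [mul_pow, mul_pow, Real.sq_sqrt r.cast_nonneg, Real.sq_sqrt (by positivity)]; norm_num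

theorem frobNorm_sub_le_mul_opNorm_sub {r : ℕ} (hA : A.PosSemidef) (hB : B.IsHermitian)
    (hr : B.rank ≤ r) (htr : A.trace = B.trace) :
    frobNorm (A - B) ≤ √(2 * r) * opNorm (A - B) := by
  have hAB : (A - B).IsHermitian := hA.isHermitian.sub hB
  have sum_eq := sum_eigenvalues_eq_zero_of_trace_eq_zero hAB (trace_sub A B ▸ sub_eq_zero.2 htr)
  have op_nonneg := opNorm_nonneg_s11 (A - B)
  rw [frobNorm_eq_sqrt_sum_sq_eigenvalues hAB, Real.sqrt_le_left (by positivity)]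
  calc ∑ i, hAB.eigenvalues i ^ 2
      ≤ 2 * #{i | hAB.eigenvalues i < 0} * opNorm (A - B) ^ 2 :=
        sum_sq_le_two_mul_card_neg_mul_sq_s11 sum_eq fun i _ => abs_eigenvalues_le_opNorm_s11 hAB i
    _ ≤ 2 * r * opNorm (A - B) ^ 2 := by
        gcongr; exact (card_neg_eigenvalues_sub_le_rank hA hAB).trans hr
    _ = (√(2 * r) * opNorm (A - B)) ^ 2 := by rw [mul_pow, Real.sq_sqrt (by positivity)]

theorem traceNorm_sub_le_mul_opNorm_sub_of_le {Φ L C S : Matrix m m ℂ} {r : ℕ} (hΦ : Φ.IsHermitian)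
    (hr : Φ.rank ≤ r) (hC : C.PosSemidef) (hCtr : C.trace = Φ.trace) (hS : S.PosSemidef)
    (hStr : S.trace = Φ.trace) (hCL : opNorm (C - Φ) ≤ 2 * opNorm (L - Φ))
    (hSC : frobNorm (S - Φ) ≤ frobNorm (C - Φ)) :
    traceNorm (S - Φ) ≤ 4 * √2 * r * opNorm (L - Φ) :=
  calc traceNorm (S - Φ) ≤ 2 * √r * frobNorm (S - Φ) :=
        traceNorm_sub_le_mul_frobNorm_sub hS hΦ hr hStr
    _ ≤ 2 * √r * frobNorm (C - Φ) := by gcongr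
    _ ≤ 2 * √r * (√(2 * r) * opNorm (C - Φ)) := by
        gcongr; exact frobNorm_sub_le_mul_opNorm_sub hC hΦ hr hCtr
    _ ≤ 2 * √r * (√(2 * r) * (2 * opNorm (L - Φ))) := by gcongr
    _ = 4 * √2 * (√r * √r) * opNorm (L - Φ) := by rw [Real.sqrt_mul zero_le_two]; ring
    _ = 4 * √2 * r * opNorm (L - Φ) := by rw [Real.mul_self_sqrt r.cast_nonneg]

end Norms

open MeasureTheory in
theorem pls_traceNorm_concentration_general {Ω m : Type*} [MeasurableSpace Ω] (μ : Measure Ω)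
    [Fintype m] [DecidableEq m] {r : ℕ} {K c : ℝ} {Φ : Matrix m m ℂ} (hΦ : Φ.IsHermitian)
    (hr : Φ.rank ≤ r) {L C S : Ω → Matrix m m ℂ}
    (hL : ∀ τ ∈ Set.Icc (0 : ℝ) 1,
      μ {ω | τ ≤ opNorm (L ω - Φ)} ≤ ENNReal.ofReal (K * Real.exp (-c * τ ^ 2)))
    (hC : ∀ᵐ ω ∂μ, (C ω).PosSemidef ∧ (C ω).trace = Φ.trace)
    (hS : ∀ᵐ ω ∂μ, (S ω).PosSemidef ∧ (S ω).trace = Φ.trace)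
    (hCL : ∀ᵐ ω ∂μ, opNorm (C ω - Φ) ≤ 2 * opNorm (L ω - Φ))
    (hSC : ∀ᵐ ω ∂μ, frobNorm (S ω - Φ) ≤ frobNorm (C ω - Φ))
    {ε : ℝ} (hε : ε ∈ Set.Ioc 0 (4 * √2 * r)) :
    μ {ω | ε ≤ traceNorm (S ω - Φ)} ≤
      ENNReal.ofReal (K * Real.exp (-c * ε ^ 2 / (32 * r ^ 2))) := by
  have hD : 0 < 4 * √2 * r := hε.1.trans_le hε.2
  have exponent : -c * (ε / (4 * √2 * r)) ^ 2 = -c * ε ^ 2 / (32 * r ^ 2) := by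
    rw [div_pow, mul_pow, mul_pow, Real.sq_sqrt zero_le_two]; ring
  calc μ {ω | ε ≤ traceNorm (S ω - Φ)}
      ≤ μ {ω | ε / (4 * √2 * r) ≤ opNorm (L ω - Φ)} := by
        refine measure_mono_ae ?_
        filter_upwards [hC, hS, hCL, hSC] with ω hCω hSω hCLω hSCω hεω
        exact (div_le_iff₀' hD).2 <| hεω.trans <|
          traceNorm_sub_le_mul_opNorm_sub_of_le hΦ hr hCω.1 hCω.2 hSω.1 hSω.2 hCLω hSCω
    _ ≤ ENNReal.ofReal (K * Real.exp (-c * ε ^ 2 / (32 * r ^ 2))) :=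
        exponent ▸ hL _ ⟨div_nonneg hε.1.le hD.le, div_le_one_of_le₀ hε.2 hD.le⟩

open MeasureTheory in
/-- trace-norm concentration, Theorem 1 eq. (4): if the least-squares
estimator `L` of a rank-`r` density matrix `Φ` satisfies the operator-norm tail bound
`ℙ(‖L − Φ‖_∞ ≥ τ) ≤ K e^{−cτ²}` for all `τ ∈ [0,1]`, the estimators `C` and `S` are density
matrices with `‖C − Φ‖_∞ ≤ 2‖L − Φ‖_∞` and `‖S − Φ‖₂ ≤ ‖C − Φ‖₂` pointwise, then
`ℙ(‖S − Φ‖₁ ≥ ε) ≤ K e^{−cε²/(32r²)}` for `ε ∈ (0,1]`. -/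
theorem pls_traceNorm_concentration {Ω : Type*} [MeasurableSpace Ω] (ℙ : Measure Ω)
    [IsProbabilityMeasure ℙ] (n r : ℕ) (hn : 1 ≤ n) (hr : 1 ≤ r) (K c : ℝ)
    (hK : 0 < K) (hc : 0 < c)
    (Φ : Matrix (Fin n) (Fin n) ℂ) (hΦ : IsDensity Φ) (hΦr : Φ.rank ≤ r)
    (L C S : Ω → Matrix (Fin n) (Fin n) ℂ)
    (hL : Measurable L) (hC : Measurable C) (hS : Measurable S)
    (ha : ∀ τ : ℝ, τ ∈ Set.Icc (0 : ℝ) 1 →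
      ℙ {ω | τ ≤ opNorm (L ω - Φ)} ≤ ENNReal.ofReal (K * Real.exp (-c * τ ^ 2)))
    (hb : ∀ ω, IsDensity (C ω) ∧ IsDensity (S ω) ∧
      opNorm (C ω - Φ) ≤ 2 * opNorm (L ω - Φ) ∧
      frobNorm (S ω - Φ) ≤ frobNorm (C ω - Φ)) :
    ∀ ε : ℝ, ε ∈ Set.Ioc (0 : ℝ) 1 →
      ℙ {ω | ε ≤ traceNorm (S ω - Φ)} ≤
        ENNReal.ofReal (K * Real.exp (-c * ε ^ 2 / (32 * r ^ 2))) := by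
  intro ε hε
  have trace_eq {ρ : Matrix (Fin n) (Fin n) ℂ} (hρ : IsDensity ρ) : ρ.trace = Φ.trace :=
    hρ.2.trans hΦ.2.symm
  have one_le : 1 ≤ 4 * √2 * r := by
    have hr' : (1 : ℝ) ≤ r := Nat.one_le_cast.2 hr
    nlinarith [Real.one_le_sqrt.2 one_le_two]
  exact pls_traceNorm_concentration_general ℙ hΦ.1.isHermitian hΦr ha
    (.of_forall fun ω => ⟨(hb ω).1.1, trace_eq (hb ω).1⟩)
    (.of_forall fun ω => ⟨(hb ω).2.1.1, trace_eq (hb ω).2.1⟩)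
    (.of_forall fun ω => (hb ω).2.2.1) (.of_forall fun ω => (hb ω).2.2.2)
    ⟨hε.1, hε.2.trans one_le⟩
end
end
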